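/- Let u ∈ ℝ[x_1,…,x_d] have total degree at most 4, let v ∈ P_A, and let w ∈ P_A satisfy w(a) = u(a) and ∇w(a) = ∇u(a) at every vertex a of K. Then for every index i with 1 ≤ i ≤ d, ∫_K ∂²(u − w)/∂x_i² · ∂²v/∂x_i² dx = − Σ_{j ≠ i} (h_j²/3) ∫_K ∂⁴u/∂x_i²∂x_j² · ∂²v/∂x_i² dx. -/

import Mathlib

open MvPolynomial MeasureTheory

/-- `Q₁`: the span of the monomials `x^α` with `α i ≤ 1` for every `i`. -/
noncomputable def Q1 (d : ℕ) : Submodule ℝ (MvPolynomial (Fin d) ℝ) :=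
  Submodule.span ℝ {p | ∃ α : Fin d →₀ ℕ, (∀ i, α i ≤ 1) ∧ p = monomial α (1 : ℝ)}

/-- The Adini shape function space `P_A = Q₁ + span{x_i² q : 1 ≤ i ≤ d, q ∈ Q₁}`. -/
noncomputable def PA (d : ℕ) : Submodule ℝ (MvPolynomial (Fin d) ℝ) :=
  Q1 d ⊔ Submodule.span ℝ {p | ∃ i : Fin d, ∃ q ∈ Q1 d, p = X i ^ 2 * q}

/-- `Q₁^i`: elements of `Q₁` of degree 0 in `x_i`. -/
noncomputable def Q1i (d : ℕ) (i : Fin d) : Submodule ℝ (MvPolynomial (Fin d) ℝ) :=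
  Submodule.span ℝ
    {p | ∃ α : Fin d →₀ ℕ, (∀ j, α j ≤ 1) ∧ α i = 0 ∧ p = monomial α (1 : ℝ)}

/-- `S^i = span{((x_j − c_j)² − h_j²) q̂ : 1 ≤ j ≤ d, q̂ ∈ Q₁^i}`. -/
noncomputable def Si (d : ℕ) (c h : Fin d → ℝ) (i : Fin d) :
    Submodule ℝ (MvPolynomial (Fin d) ℝ) :=
  Submodule.span ℝ
    {p | ∃ j : Fin d, ∃ q ∈ Q1i d i, p = ((X j - C (c j)) ^ 2 - C (h j ^ 2)) * q}

/-- The vertices of the `d`-rectangle with centre `c` and half-lengths `h`. -/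
def IsVertex {d : ℕ} (c h : Fin d → ℝ) (a : Fin d → ℝ) : Prop :=
  ∀ i, a i = c i - h i ∨ a i = c i + h i

/-- The `d`-rectangle `K = ∏_i [c_i − h_i, c_i + h_i]`. -/
def box {d : ℕ} (c h : Fin d → ℝ) : Set (Fin d → ℝ) :=
  Set.univ.pi fun i => Set.Icc (c i - h i) (c i + h i)

/-- The iterated partial derivative `∂^α`. -/
noncomputable def pderivPow {d : ℕ} (α : Fin d → ℕ) :
    MvPolynomial (Fin d) ℝ →ₗ[ℝ] MvPolynomial (Fin d) ℝ :=
  (List.ofFn fun i : Fin d =>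
    ((pderiv (R := ℝ) i).toLinearMap :
        Module.End ℝ (MvPolynomial (Fin d) ℝ)) ^ α i).prod

noncomputable def bub {d : ℕ} (c h : Fin d → ℝ) (j : Fin d) : MvPolynomial (Fin d) ℝ :=
  (X j - C (c j)) ^ 2 - C (h j ^ 2)

noncomputable def lin {d : ℕ} (c h : Fin d → ℝ) (j : Fin d) : MvPolynomial (Fin d) ℝ :=
  C (2 * c j) * X j + C (h j ^ 2 - c j ^ 2)

noncomputable def leg {d : ℕ} (c h : Fin d → ℝ) (j : Fin d) : MvPolynomial (Fin d) ℝ :=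
  C 3 * (X j - C (c j)) ^ 2 - C (h j ^ 2)

noncomputable def bubSpan {d : ℕ} (c h : Fin d → ℝ) : Submodule ℝ (MvPolynomial (Fin d) ℝ) :=
  Submodule.span ℝ {p | ∃ j k : Fin d, p = bub c h j * bub c h k}

lemma X_sq_eq {d : ℕ} (c h : Fin d → ℝ) (j : Fin d) :
    (X j : MvPolynomial (Fin d) ℝ) ^ 2 = bub c h j + lin c h j := by
  simp only [bub, lin, map_sub, map_mul, map_pow, map_ofNat]; ring

lemma mono_mem_Q1 {d : ℕ} (α : Fin d →₀ ℕ) (hα : ∀ i, α i ≤ 1) (r : ℝ) :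
    monomial α r ∈ Q1 d := by
  have : monomial α r = r • (monomial α (1:ℝ)) := by simp [smul_monomial]
  rw [this]
  exact Submodule.smul_mem _ _ (Submodule.subset_span ⟨α, hα, rfl⟩)

lemma sqmul_mem_PA {d : ℕ} (i : Fin d) (q : MvPolynomial (Fin d) ℝ) (hq : q ∈ Q1 d) :
    X i ^ 2 * q ∈ PA d :=
  Submodule.mem_sup_right (Submodule.subset_span ⟨i, q, hq, rfl⟩)

lemma C_mem_Q1 {d : ℕ} (r : ℝ) : (C r : MvPolynomial (Fin d) ℝ) ∈ Q1 d :=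
  mono_mem_Q1 0 (by simp) r

lemma CX_mem_Q1 {d : ℕ} (r : ℝ) (i : Fin d) : (C r * X i : MvPolynomial (Fin d) ℝ) ∈ Q1 d := by
  rw [C_mul_X_eq_monomial]
  refine mono_mem_Q1 _ (fun j => ?_) r
  rw [Finsupp.single_apply]; split_ifs <;> simp

lemma lin_mem_Q1 {d : ℕ} (c h : Fin d → ℝ) (j : Fin d) : lin c h j ∈ Q1 d :=
  add_mem (CX_mem_Q1 _ _) (C_mem_Q1 _)

lemma CXX_mem_Q1 {d : ℕ} (r : ℝ) (i j : Fin d) (hij : i ≠ j) :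
    (C r * (X i * X j) : MvPolynomial (Fin d) ℝ) ∈ Q1 d := by
  have : (C r * (X i * X j) : MvPolynomial (Fin d) ℝ)
      = monomial (Finsupp.single i 1 + Finsupp.single j 1) r := by
    rw [← mul_assoc, C_mul_X_eq_monomial, X, monomial_mul, mul_one]
  rw [this]
  refine mono_mem_Q1 _ (fun k => ?_) r
  simp only [Finsupp.add_apply, Finsupp.single_apply]
  split_ifs <;> simp_all

lemma linlin_mem_PA {d : ℕ} (c h : Fin d → ℝ) (i j : Fin d) :
    lin c h i * lin c h j ∈ PA d := by
  by_cases hij : i = j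
  · subst hij
    have : lin c h i * lin c h i = X i ^ 2 * C ((2 * c i)^2)
        + (C (2 * (2 * c i) * (h i ^ 2 - c i ^ 2)) * X i + C ((h i ^ 2 - c i ^ 2)^2)) := by
      simp only [lin, map_sub, map_mul, map_pow, map_ofNat]; ring
    rw [this]
    exact add_mem (sqmul_mem_PA _ _ (C_mem_Q1 _))
      (Submodule.mem_sup_left (add_mem (CX_mem_Q1 _ _) (C_mem_Q1 _)))
  · have : lin c h i * lin c h j = C (4 * c i * c j) * (X i * X j)
        + C (2 * c i * (h j ^ 2 - c j ^ 2)) * X i + C (2 * c j * (h i ^ 2 - c i ^ 2)) * X j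
        + C ((h i ^ 2 - c i ^ 2) * (h j ^ 2 - c j ^ 2)) := by
      simp only [lin, map_sub, map_mul, map_pow, map_ofNat]; ring
    rw [this]
    exact Submodule.mem_sup_left (add_mem (add_mem (add_mem (CXX_mem_Q1 _ _ _ hij)
      (CX_mem_Q1 _ _)) (CX_mem_Q1 _ _)) (C_mem_Q1 _))

lemma monomial_split {d : ℕ} (i : Fin d) (α : Fin d →₀ ℕ) (hi : 2 ≤ α i) (r : ℝ) :
    monomial α r = X i ^ 2 * monomial (α - Finsupp.single i 2) r := by
  rw [X_pow_eq_monomial, monomial_mul, one_mul, add_tsub_cancel_of_le]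
  simpa [Finsupp.single_le_iff] using hi

lemma monomial_mem {d : ℕ} (c h : Fin d → ℝ) (α : Fin d →₀ ℕ) (hα : ∑ i, α i ≤ 4) (r : ℝ) :
    monomial α r ∈ PA d ⊔ bubSpan c h := by
  by_cases h1 : ∀ i, α i ≤ 1
  · exact Submodule.mem_sup_left (Submodule.mem_sup_left (mono_mem_Q1 α h1 r))
  push Not at h1
  obtain ⟨i, hi⟩ := h1
  rw [monomial_split i α hi]
  set β := α - Finsupp.single i 2 with hβ
  have hαβ : α = Finsupp.single i 2 + β := by
    rw [hβ, add_tsub_cancel_of_le]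
    exact Finsupp.single_le_iff.2 hi
  have hs : ∑ k, β k ≤ 2 := by
    rw [hαβ] at hα
    simp only [Finsupp.add_apply, Finset.sum_add_distrib, Finsupp.single_apply,
      Finset.sum_ite_eq, Finset.mem_univ, if_true] at hα
    omega
  by_cases h2 : ∀ j, β j ≤ 1
  · exact Submodule.mem_sup_left (sqmul_mem_PA _ _ (mono_mem_Q1 _ h2 r))
  push Not at h2
  obtain ⟨j, hj⟩ := h2
  rw [monomial_split j β hj]
  have h0 : β - Finsupp.single j 2 = 0 := by
    ext k
    have hk : β j ≤ 2 := (Finset.single_le_sum (f := fun k => β k) (fun _ _ => Nat.zero_le _)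
      (Finset.mem_univ j)).trans hs
    by_cases hkj : k = j
    · subst hkj; simp; omega
    · have : β k + β j ≤ ∑ k, β k := by
        rw [← Finset.sum_pair (f := fun k => β k) hkj]
        exact Finset.sum_le_sum_of_subset (Finset.subset_univ _)
      simp; omega
  rw [h0]
  have e : (X i ^ 2 * (X j ^ 2 * monomial 0 r) : MvPolynomial (Fin d) ℝ)
      = r • (X i ^ 2 * lin c h j + X j ^ 2 * lin c h i - lin c h i * lin c h j)
        + r • (bub c h i * bub c h j) := by
    rw [X_sq_eq c h i, X_sq_eq c h j, smul_eq_C_mul, smul_eq_C_mul]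
    change _ * (_ * C r) = _
    ring
  rw [e]
  refine add_mem (Submodule.mem_sup_left (Submodule.smul_mem _ _ ?_))
    (Submodule.mem_sup_right (Submodule.smul_mem _ _ (Submodule.subset_span ⟨i, j, rfl⟩)))
  exact sub_mem (add_mem (sqmul_mem_PA _ _ (lin_mem_Q1 _ _ _)) (sqmul_mem_PA _ _ (lin_mem_Q1 _ _ _)))
    (linlin_mem_PA _ _ _ _)

lemma u_mem {d : ℕ} (c h : Fin d → ℝ) (u : MvPolynomial (Fin d) ℝ) (hu : u.totalDegree ≤ 4) :
    u ∈ PA d ⊔ bubSpan c h := by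
  rw [u.as_sum]
  refine sum_mem fun α hα => monomial_mem c h α ?_ _
  have := (le_totalDegree hα).trans hu
  rwa [Finsupp.sum_fintype _ _ (by simp)] at this

/-! derivative facts -/

lemma dd_monomial {d : ℕ} (i : Fin d) (α : Fin d →₀ ℕ) (hα : α i ≤ 1) (r : ℝ) :
    pderiv i (pderiv i (monomial α r)) = 0 := by
  rw [pderiv_monomial, pderiv_monomial]
  have : (α - Finsupp.single i 1 : Fin d →₀ ℕ) i = 0 := by simp; omega
  rw [this]; simp

lemma dd_Q1 {d : ℕ} (i : Fin d) (q : MvPolynomial (Fin d) ℝ) (hq : q ∈ Q1 d) :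
    pderiv i (pderiv i q) = 0 := by
  induction hq using Submodule.span_induction with
  | mem x hx => obtain ⟨α, hα, rfl⟩ := hx; exact dd_monomial i α (hα i) 1
  | zero => simp
  | add x y _ _ hx hy => simp [hx, hy]
  | smul a x _ hx => simp [hx]

lemma dd_sq {d : ℕ} (i k : Fin d) (q : MvPolynomial (Fin d) ℝ) (hq : q ∈ Q1 d) :
    pderiv i (pderiv i (X k ^ 2 * q)) ∈ Q1 d := by
  induction hq using Submodule.span_induction with
  | mem x hx =>
    obtain ⟨α, hα, rfl⟩ := hx
    rw [X_pow_eq_monomial, monomial_mul, one_mul]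
    by_cases hik : k = i
    · subst hik
      rw [pderiv_monomial, pderiv_monomial]
      refine mono_mem_Q1 _ (fun j => ?_) _
      have := hα j
      simp [Finsupp.single_apply]; split_ifs <;> omega
    · rw [dd_monomial _ _ (by simpa [Finsupp.single_apply, hik] using hα i)]
      exact zero_mem _
  | zero => simp
  | add x y _ _ hx hy => rw [mul_add, map_add, map_add]; exact add_mem hx hy
  | smul a x _ hx =>
    rw [mul_smul_comm, Derivation.map_smul, Derivation.map_smul]; exact Submodule.smul_mem _ _ hx

lemma dd_PA {d : ℕ} (i : Fin d) (q : MvPolynomial (Fin d) ℝ) (hq : q ∈ PA d) :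
    pderiv i (pderiv i q) ∈ Q1 d := by
  obtain ⟨y, hy, z, hz, rfl⟩ := Submodule.mem_sup.1 hq
  rw [map_add, map_add, dd_Q1 i y hy, zero_add]
  clear hq
  induction hz using Submodule.span_induction with
  | mem x hx => obtain ⟨k, q, hq, rfl⟩ := hx; exact dd_sq i k q hq
  | zero => simp
  | add x y _ _ hx hy => rw [map_add, map_add]; exact add_mem hx hy
  | smul a x _ hx =>
    rw [Derivation.map_smul, Derivation.map_smul]; exact Submodule.smul_mem _ _ hx

lemma pderiv_bub {d : ℕ} (c h : Fin d → ℝ) (i j : Fin d) :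
    pderiv i (bub c h j) = if i = j then C 2 * (X j - C (c j)) else 0 := by
  unfold bub
  split_ifs with hij
  · subst hij; simp [Derivation.leibniz_pow, map_ofNat C]
  · simp [Derivation.leibniz_pow, pderiv_X_of_ne (Ne.symm hij)]

/-! unisolvence -/

lemma degreeOf_Q1 {d : ℕ} (i : Fin d) (q : MvPolynomial (Fin d) ℝ) (hq : q ∈ Q1 d) :
    q.degreeOf i ≤ 1 := by
  induction hq using Submodule.span_induction with
  | mem x hx =>
    obtain ⟨α, hα, rfl⟩ := hx; rw [degreeOf_monomial_eq _ _ one_ne_zero]; exact hα i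
  | zero => simp
  | add x y _ _ hx hy => exact (degreeOf_add_le _ _ _).trans (max_le hx hy)
  | smul a x _ hx => rw [smul_eq_C_mul]; exact (degreeOf_C_mul_le _ _ _).trans hx

lemma Q1_unisolvent {d : ℕ} (c h : Fin d → ℝ) (hh : ∀ i, 0 < h i)
    (q : MvPolynomial (Fin d) ℝ) (hq : q ∈ Q1 d)
    (h0 : ∀ a, IsVertex c h a → eval a q = 0) : q = 0 := by
  refine eq_zero_of_eval_zero_at_prod_finset q (fun i => {c i - h i, c i + h i}) (fun i => ?_)
    (fun a ha => h0 a (fun i => ?_))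
  · rw [Finset.card_pair (by have := hh i; intro hc; linarith)]
    have := degreeOf_Q1 i q hq
    omega
  · simpa using ha i

def AdRep {d : ℕ} (c h : Fin d → ℝ) (w : MvPolynomial (Fin d) ℝ) : Prop :=
  ∃ q ∈ Q1 d, ∃ r : Fin d → MvPolynomial (Fin d) ℝ, (∀ j, r j ∈ Q1 d) ∧
    w = q + ∑ j, bub c h j * r j

lemma AdRep.add {d : ℕ} {c h : Fin d → ℝ} {w w' : MvPolynomial (Fin d) ℝ}
    (H : AdRep c h w) (H' : AdRep c h w') : AdRep c h (w + w') := by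
  obtain ⟨q, hq, r, hr, rfl⟩ := H
  obtain ⟨q', hq', r', hr', rfl⟩ := H'
  refine ⟨q + q', add_mem hq hq', r + r', fun j => add_mem (hr j) (hr' j), ?_⟩
  simp only [Pi.add_apply, mul_add, Finset.sum_add_distrib]; ring

lemma AdRep.smul {d : ℕ} {c h : Fin d → ℝ} {w : MvPolynomial (Fin d) ℝ}
    (a : ℝ) (H : AdRep c h w) : AdRep c h (a • w) := by
  obtain ⟨q, hq, r, hr, rfl⟩ := H
  refine ⟨a • q, Submodule.smul_mem _ _ hq, a • r, fun j => Submodule.smul_mem _ _ (hr j), ?_⟩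
  simp only [Pi.smul_apply, smul_add, Finset.smul_sum, mul_smul_comm]

lemma AdRep.of_Q1 {d : ℕ} {c h : Fin d → ℝ} {w : MvPolynomial (Fin d) ℝ}
    (H : w ∈ Q1 d) : AdRep c h w :=
  ⟨w, H, 0, fun _ => zero_mem _, by simp⟩

lemma AdRep.of_bub {d : ℕ} {c h : Fin d → ℝ} {q : MvPolynomial (Fin d) ℝ} (j : Fin d)
    (H : q ∈ Q1 d) : AdRep c h (bub c h j * q) := by
  refine ⟨0, zero_mem _, Pi.single j q, fun k => ?_, ?_⟩
  · by_cases hk : k = j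
    · subst hk; simpa using H
    · simp [hk]
  · rw [Finset.sum_eq_single j] <;> simp +contextual

lemma rep_mono0 {d : ℕ} (c h : Fin d → ℝ) (j : Fin d) (α : Fin d →₀ ℕ) (hα : ∀ i, α i ≤ 1)
    (h0 : α j = 0) : AdRep c h (X j ^ 2 * monomial α 1) := by
  rw [X_sq_eq c h, add_mul]
  refine (AdRep.of_bub j (mono_mem_Q1 α hα 1)).add (AdRep.of_Q1 ?_)
  have : lin c h j * monomial α 1 = monomial (Finsupp.single j 1 + α) (2 * c j)
      + monomial α (h j ^ 2 - c j ^ 2) := by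
    rw [lin, add_mul, C_mul_monomial, mul_one, C_mul_X_eq_monomial, monomial_mul, mul_one]
  rw [this]
  refine add_mem (mono_mem_Q1 _ (fun k => ?_) _) (mono_mem_Q1 _ hα _)
  have := hα k
  by_cases hk : j = k
  · subst hk; simp [h0]
  · simpa [Finsupp.single_apply, hk] using this

lemma rep_mono {d : ℕ} (c h : Fin d → ℝ) (j : Fin d) (α : Fin d →₀ ℕ) (hα : ∀ i, α i ≤ 1) :
    AdRep c h (X j ^ 2 * monomial α 1) := by
  by_cases h0 : α j = 0
  · exact rep_mono0 c h j α hα h0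
  have h1 : α j = 1 := by have := hα j; omega
  set β := α - Finsupp.single j 1 with hβ
  have hαβ : α = Finsupp.single j 1 + β := by
    rw [hβ, add_tsub_cancel_of_le]
    simp [Finsupp.single_le_iff, h1]
  have hm : (monomial α 1 : MvPolynomial (Fin d) ℝ) = X j * monomial β 1 := by
    rw [X, monomial_mul, ← hαβ, one_mul]
  have e : (X j ^ 2 * monomial α 1 : MvPolynomial (Fin d) ℝ) =
      bub c h j * monomial α 1 + ((2 * c j) • (X j ^ 2 * monomial β 1)
        + (h j ^ 2 - c j ^ 2) • monomial α 1) := by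
    rw [smul_eq_C_mul, smul_eq_C_mul, X_sq_eq c h, hm]
    have := X_sq_eq c h j
    rw [← X_sq_eq c h, X_sq_eq c h j]
    rw [show bub c h j = X j ^ 2 - lin c h j by rw [this]; ring, lin]
    ring
  rw [e]
  refine (AdRep.of_bub j (mono_mem_Q1 α hα 1)).add
    (((rep_mono0 c h j β (fun i => ?_) ?_).smul _).add
      ((AdRep.of_Q1 (mono_mem_Q1 α hα 1)).smul _))
  · have := hα i; simp [hβ]; omega
  · simp [hβ, h1]

lemma rep_PA {d : ℕ} (c h : Fin d → ℝ) (w : MvPolynomial (Fin d) ℝ) (hw : w ∈ PA d) :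
    AdRep c h w := by
  obtain ⟨y, hy, z, hz, rfl⟩ := Submodule.mem_sup.1 hw
  refine (AdRep.of_Q1 hy).add ?_
  clear hw
  induction hz using Submodule.span_induction with
  | mem x hx =>
    obtain ⟨k, q, hq, rfl⟩ := hx
    induction hq using Submodule.span_induction with
    | mem x hx => obtain ⟨α, hα, rfl⟩ := hx; exact rep_mono c h k α hα
    | zero => rw [mul_zero]; exact AdRep.of_Q1 (zero_mem _)
    | add x y _ _ hx hy => rw [mul_add]; exact hx.add hy
    | smul a x _ hx => rw [mul_smul_comm]; exact hx.smul a
  | zero => exact AdRep.of_Q1 (zero_mem _)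
  | add x y _ _ hx hy => exact hx.add hy
  | smul a x _ hx => exact hx.smul a

lemma eval_bub {d : ℕ} {c h : Fin d → ℝ} {a : Fin d → ℝ} (ha : IsVertex c h a) (j : Fin d) :
    eval a (bub c h j) = 0 := by
  simp only [bub, map_sub, map_pow, eval_X, eval_C]
  rcases ha j with hj | hj <;> rw [hj] <;> ring

lemma vertex_ne {d : ℕ} {c h : Fin d → ℝ} (hh : ∀ i, 0 < h i) {a : Fin d → ℝ}
    (ha : IsVertex c h a) (j : Fin d) : a j - c j ≠ 0 := by
  have := hh j
  rcases ha j with hj | hj <;> rw [hj] <;> intro hc <;> linarith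

lemma PA_unisolvent {d : ℕ} (c h : Fin d → ℝ) (hh : ∀ i, 0 < h i)
    (w : MvPolynomial (Fin d) ℝ) (hw : w ∈ PA d)
    (h0 : ∀ a, IsVertex c h a → eval a w = 0 ∧ ∀ k, eval a (pderiv k w) = 0) : w = 0 := by
  obtain ⟨q, hq, r, hr, rfl⟩ := rep_PA c h w hw
  have q0 : q = 0 := Q1_unisolvent c h hh q hq fun a ha => by
    have := (h0 a ha).1
    simpa [eval_bub ha] using this
  subst q0
  have r0 : ∀ j, r j = 0 := fun j => Q1_unisolvent c h hh _ (hr j) fun a ha => by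
    have := (h0 a ha).2 j
    simp only [zero_add, map_sum, Derivation.leibniz, smul_eq_mul, map_add, map_mul, eval_bub ha,
      zero_mul, pderiv_bub] at this
    rw [Finset.sum_eq_single j] at this
    · simp at this
      rcases this with h | h
      · exact h
      · exact absurd h (vertex_ne hh ha j)
    · intro b _ hb; simp [Ne.symm hb]
    · simp
  simp [r0]

lemma bubSpan_vertex {d : ℕ} (c h : Fin d → ℝ) (m : MvPolynomial (Fin d) ℝ) (hm : m ∈ bubSpan c h)
    (a : Fin d → ℝ) (ha : IsVertex c h a) : eval a m = 0 ∧ ∀ k, eval a (pderiv k m) = 0 := by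
  induction hm using Submodule.span_induction with
  | mem x hx => obtain ⟨j, k, rfl⟩ := hx; simp [eval_bub ha, Derivation.leibniz]
  | zero => simp
  | add x y _ _ hx hy => simp [hx, hy]
  | smul a x _ hx => simp [hx, smul_eq_C_mul]

/-! the main operator -/

noncomputable def opT {d : ℕ} (h : Fin d → ℝ) (i : Fin d) (m : MvPolynomial (Fin d) ℝ) :
    MvPolynomial (Fin d) ℝ :=
  pderiv i (pderiv i m) +
    ∑ j ∈ Finset.univ.erase i, (h j ^ 2 / 3) • pderiv i (pderiv i (pderiv j (pderiv j m)))

lemma dd_bub {d : ℕ} (c h : Fin d → ℝ) (i j : Fin d) :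
    pderiv i (pderiv i (bub c h j)) = if i = j then C 2 else 0 := by
  rw [pderiv_bub]; split_ifs with hij
  · subst hij; simp
  · simp

lemma opT_bub_self {d : ℕ} (c h : Fin d → ℝ) (i : Fin d) :
    opT h i (bub c h i * bub c h i) = (4:ℝ) • leg c h i := by
  unfold opT
  rw [Finset.sum_eq_zero, add_zero]
  · simp only [Derivation.leibniz, smul_eq_mul, pderiv_bub, if_true, map_add, map_sub, pderiv_C,
      pderiv_X_self]
    simp only [smul_eq_C_mul, leg, bub, map_ofNat]
    ring
  · intro j hj
    have hj' : j ≠ i := Finset.ne_of_mem_erase hj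
    simp [Derivation.leibniz, pderiv_bub, hj']

lemma opT_bub_ne {d : ℕ} (c h : Fin d → ℝ) (i k : Fin d) (hik : i ≠ k) :
    opT h i (bub c h i * bub c h k) = (2/3:ℝ) • leg c h k := by
  unfold opT
  have e : ∀ j, j ≠ i → pderiv j (pderiv j (bub c h i * bub c h k)) =
      if j = k then C 2 * bub c h i else 0 := by
    intro j hj
    simp only [Derivation.leibniz, smul_eq_mul, pderiv_bub, if_neg hj, map_add]
    split_ifs with hjk
    · subst hjk; simp; ring
    · simp
  rw [Finset.sum_eq_single k]
  · have e2 : pderiv i (pderiv i (bub c h i * bub c h k)) = C 2 * bub c h k := by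
      simp only [Derivation.leibniz, smul_eq_mul, pderiv_bub, if_neg hik, if_true, map_add,
        map_sub, pderiv_C, pderiv_X_self, map_zero]
      ring
    rw [e k hik.symm, if_pos rfl, e2, ← smul_eq_C_mul, ← smul_eq_C_mul, Derivation.map_smul,
      Derivation.map_smul, dd_bub, if_pos rfl, leg, bub]
    refine MvPolynomial.funext fun x => ?_
    simp only [map_add, smul_eval, map_sub, map_mul, map_pow, eval_X, eval_C]
    ring
  · intro j hj hjk
    rw [e j (Finset.ne_of_mem_erase hj), if_neg hjk]; simp
  · simp [hik.symm]

lemma pd_comm {d : ℕ} (i j : Fin d) (p : MvPolynomial (Fin d) ℝ) :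
    pderiv i (pderiv j p) = pderiv j (pderiv i p) := by
  induction p using MvPolynomial.induction_on with
  | C a => simp
  | add p q hp hq => simp [hp, hq]
  | mul_X p k hp =>
    have hX : ∀ a b : Fin d, pderiv a (pderiv b (X k : MvPolynomial (Fin d) ℝ)) = 0 := by
      intro a b
      rw [pderiv_X, Pi.single_apply]; split_ifs <;> simp
    simp only [Derivation.leibniz, smul_eq_mul, map_add, hp, hX]
    ring

lemma opT_bub_none {d : ℕ} (c h : Fin d → ℝ) (i k l : Fin d) (hik : i ≠ k) (hil : i ≠ l) :
    opT h i (bub c h k * bub c h l) = 0 := by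
  unfold opT
  have e0 : pderiv i (bub c h k * bub c h l) = 0 := by
    simp [Derivation.leibniz, pderiv_bub, hik, hil]
  have e : ∀ j, pderiv i (pderiv i (pderiv j (pderiv j (bub c h k * bub c h l)))) = 0 := by
    intro j
    rw [pd_comm i j (pderiv j _), pd_comm i j (bub c h k * bub c h l), e0]; simp
  rw [e0, Finset.sum_eq_zero fun j _ => by rw [e j, smul_zero]]; simp

lemma integral_leg_mono {d : ℕ} (c h : Fin d → ℝ) (hh : ∀ i, 0 < h i) (l : Fin d)
    (α : Fin d →₀ ℕ) (hα : ∀ i, α i ≤ 1) :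
    ∫ x in box c h, eval x (leg c h l) * eval x (monomial α (1:ℝ)) = 0 := by
  have e : ∀ x : Fin d → ℝ, eval x (leg c h l) * eval x (monomial α (1:ℝ)) =
      ∏ j, (if j = l then (3 * (x j - c j)^2 - h j ^ 2) else 1) * x j ^ α j := by
    intro x
    rw [Finset.prod_mul_distrib, eval_monomial, Finsupp.prod_fintype _ _ (by simp)]
    simp [leg]
  simp only [e]
  rw [box, volume_pi, Measure.restrict_pi_pi]
  rw [integral_fintype_prod_eq_prod (𝕜 := ℝ) (fun j (t : ℝ) =>
    (if j = l then (3 * (t - c j)^2 - h j ^ 2) else 1) * t ^ α j)]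
  refine Finset.prod_eq_zero (Finset.mem_univ l) ?_
  simp only [if_true]
  rw [integral_Icc_eq_integral_Ioc, ← intervalIntegral.integral_of_le (by linarith [hh l])]
  set s := c l
  set t := h l
  have : α l = 0 ∨ α l = 1 := by have := hα l; omega
  have key : ∀ A B : ℝ, ∫ x in (s - t)..(s + t), (3 * (x - s)^2 - t^2) * (A + B * x) = 0 := by
    intro A B
    have hder : ∀ x ∈ Set.uIcc (s-t) (s+t), HasDerivAt (fun x : ℝ => (A + B * s) * ((x-s)^3 - t^2 * (x - s))
        + B * (3/4 * (x-s)^4 - t^2/2 * (x-s)^2)) ((3 * (x - s)^2 - t^2) * (A + B * x)) x := by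
      intro x _
      have h1 : HasDerivAt (fun x : ℝ => x - s) 1 x := (hasDerivAt_id x).sub_const s
      have := (((h1.pow 3).sub (h1.const_mul (t^2))).const_mul (A + B * s)).add
        ((((h1.pow 4).const_mul (3/4)).sub ((h1.pow 2).const_mul (t^2/2))).const_mul B)
      refine this.congr_deriv ?_
      push_cast; ring
    rw [intervalIntegral.integral_eq_sub_of_hasDerivAt hder]
    · ring
    · exact Continuous.intervalIntegrable (by fun_prop) _ _
  rcases this with h0 | h0 <;> rw [h0]
  · simpa using key 1 0
  · simpa using key 0 1

lemma box_integrable {d : ℕ} (c h : Fin d → ℝ) (p q : MvPolynomial (Fin d) ℝ) :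
    IntegrableOn (fun x => eval x p * eval x q) (box c h) := by
  refine ContinuousOn.integrableOn_compact (isCompact_univ_pi fun _ => isCompact_Icc) ?_
  exact ((continuous_eval p).mul (continuous_eval q)).continuousOn

lemma integral_leg {d : ℕ} (c h : Fin d → ℝ) (hh : ∀ i, 0 < h i) (l : Fin d)
    (q : MvPolynomial (Fin d) ℝ) (hq : q ∈ Q1 d) :
    ∫ x in box c h, eval x (leg c h l) * eval x q = 0 := by
  induction hq using Submodule.span_induction with
  | mem x hx => obtain ⟨α, hα, rfl⟩ := hx; exact integral_leg_mono c h hh l α hα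
  | zero => simp
  | add x y _ _ hx hy =>
    simp only [map_add, mul_add]
    rw [integral_add (box_integrable c h _ _) (box_integrable c h _ _), hx, hy, add_zero]
  | smul a x _ hx =>
    simp only [smul_eval, mul_left_comm _ a]
    rw [integral_const_mul, hx, mul_zero]

lemma opT_add {d : ℕ} (h : Fin d → ℝ) (i : Fin d) (x y : MvPolynomial (Fin d) ℝ) :
    opT h i (x + y) = opT h i x + opT h i y := by
  simp only [opT, map_add, smul_add, Finset.sum_add_distrib]; ring

lemma opT_smul {d : ℕ} (h : Fin d → ℝ) (i : Fin d) (a : ℝ) (x : MvPolynomial (Fin d) ℝ) :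
    opT h i (a • x) = a • opT h i x := by
  simp only [opT, Derivation.map_smul, smul_add, Finset.smul_sum, smul_comm a]

lemma opT_mem {d : ℕ} (c h : Fin d → ℝ) (i : Fin d) (m : MvPolynomial (Fin d) ℝ)
    (hm : m ∈ bubSpan c h) : opT h i m ∈ Submodule.span ℝ (Set.range (leg c h)) := by
  induction hm using Submodule.span_induction with
  | mem x hx =>
    obtain ⟨k, l, rfl⟩ := hx
    have hl : ∀ (r : ℝ) k, r • leg c h k ∈ Submodule.span ℝ (Set.range (leg c h)) :=
      fun r k => Submodule.smul_mem _ _ (Submodule.subset_span ⟨k, rfl⟩)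
    by_cases h1 : i = k
    · subst h1
      by_cases h2 : i = l
      · subst h2; rw [opT_bub_self]; exact hl _ _
      · rw [opT_bub_ne _ _ _ _ h2]; exact hl _ _
    · by_cases h2 : i = l
      · subst h2; rw [mul_comm, opT_bub_ne _ _ _ _ h1]; exact hl _ _
      · rw [opT_bub_none _ _ _ _ _ h1 h2]; exact zero_mem _
  | zero => simp [opT]
  | add x y _ _ hx hy => rw [opT_add]; exact add_mem hx hy
  | smul a x _ hx => rw [opT_smul]; exact Submodule.smul_mem _ _ hx

lemma integral_span_leg {d : ℕ} (c h : Fin d → ℝ) (hh : ∀ i, 0 < h i)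
    (p : MvPolynomial (Fin d) ℝ) (hp : p ∈ Submodule.span ℝ (Set.range (leg c h)))
    (q : MvPolynomial (Fin d) ℝ) (hq : q ∈ Q1 d) :
    ∫ x in box c h, eval x p * eval x q = 0 := by
  induction hp using Submodule.span_induction with
  | mem x hx => obtain ⟨l, rfl⟩ := hx; exact integral_leg c h hh l q hq
  | zero => simp
  | add x y _ _ hx hy =>
    simp only [map_add, add_mul]
    rw [integral_add (box_integrable c h _ _) (box_integrable c h _ _), hx, hy, add_zero]
  | smul a x _ hx =>
    simp only [smul_eval, mul_assoc]
    rw [integral_const_mul, hx, mul_zero]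

/-- for `u` of total degree at most 4, `v ∈ P_A`, and `w ∈ P_A` the Adini
canonical interpolant of `u`, for every `i`,
`∫_K ∂²(u−w)/∂x_i² ∂²v/∂x_i² = − Σ_{j≠i} (h_j²/3) ∫_K ∂⁴u/∂x_i²∂x_j² ∂²v/∂x_i²`. -/
theorem adini_pure_terms_identity (d : ℕ) (hd : 1 ≤ d)
    (c h : Fin d → ℝ) (hh : ∀ i, 0 < h i)
    (u : MvPolynomial (Fin d) ℝ) (hu : u.totalDegree ≤ 4)
    (v : MvPolynomial (Fin d) ℝ) (hv : v ∈ PA d)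
    (w : MvPolynomial (Fin d) ℝ) (hw : w ∈ PA d)
    (hmatch : ∀ a : Fin d → ℝ, IsVertex c h a →
      eval a w = eval a u ∧ ∀ k : Fin d, eval a (pderiv k w) = eval a (pderiv k u)) :
    ∀ i : Fin d,
      ∫ x in box c h,
        eval x (pderiv i (pderiv i (u - w))) * eval x (pderiv i (pderiv i v)) =
      - ∑ j ∈ Finset.univ.erase i,
          (h j ^ 2 / 3) *
            ∫ x in box c h,
              eval x (pderiv i (pderiv i (pderiv j (pderiv j u)))) *
                eval x (pderiv i (pderiv i v)) := by
  intro i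
  obtain ⟨p, hp, m, hm, rfl⟩ := Submodule.mem_sup.1 (u_mem c h u hu)
  have hwp : w - p = 0 := by
    refine PA_unisolvent c h hh _ (sub_mem hw hp) fun a ha => ?_
    obtain ⟨h1, h2⟩ := hmatch a ha
    obtain ⟨h3, h4⟩ := bubSpan_vertex c h m hm a ha
    refine ⟨?_, fun k => ?_⟩
    · rw [map_sub, h1, map_add, h3]; ring
    · rw [map_sub, map_sub, h2 k, map_add, map_add, h4 k]; ring
  obtain rfl : w = p := sub_eq_zero.1 hwp
  have hφ := dd_PA i v hv
  have key := integral_span_leg c h hh _ (opT_mem c h i m hm) _ hφ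
  set φ := pderiv i (pderiv i v) with hφdef
  have e1 : ∀ j ∈ Finset.univ.erase i,
      (h j ^ 2 / 3) * ∫ x in box c h,
        eval x (pderiv i (pderiv i (pderiv j (pderiv j (w + m))))) * eval x φ
      = ∫ x in box c h, (h j ^ 2 / 3) *
        (eval x (pderiv i (pderiv i (pderiv j (pderiv j m)))) * eval x φ) := by
    intro j _
    rw [integral_const_mul, map_add, map_add, map_add, map_add, dd_Q1 i _ (dd_PA j w hw), zero_add]
  rw [Finset.sum_congr rfl e1, ← integral_finsetSum _
    (fun j _ => (box_integrable c h _ _).const_mul _), add_sub_cancel_left, eq_neg_iff_add_eq_zero,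
    ← integral_add (box_integrable c h _ _)
      (integrable_finsetSum _ fun j _ => (box_integrable c h _ _).const_mul _), ← key]
  congr 1
  ext x
  simp only [opT, map_add, map_sum, smul_eval, add_mul, Finset.sum_mul, mul_assoc]
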